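/- Suppose r₁, r₂ ∈ ℝ and f ∈ B^{r₁}_{1,∞}(T) ∩ B^{r₂}_{∞,∞}(T). Then f ∈ H^r(T) for every r < (r₁ + r₂)/2. -/

import Mathlib

open Real Set MeasureTheory

/-- The `n`-th Fourier coefficient `f̂(n) = (1/2π) ∫_{-π}^{π} e^{-iny} f(y) dy`. -/
noncomputable def fc (f : ℝ → ℂ) (n : ℤ) : ℂ :=
  (1 / (2 * π) : ℂ) * ∫ y in (-π : ℝ)..π, Complex.exp (-Complex.I * n * y) * f y

/-- The dyadic cutoffs: `χ_j(ξ) = χ(2^{-j}ξ)` for `j ≥ 1` and `χ₀ = 1 - Σ_{j≥1} χ_j`. -/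
noncomputable def chij (χ : ℝ → ℝ) : ℕ → ℝ → ℝ
  | 0 => fun ξ => 1 - ∑' j : ℕ, χ ((2 : ℝ) ^ (-((j : ℝ) + 1)) * ξ)
  | (j + 1) => fun ξ => χ ((2 : ℝ) ^ (-((j : ℝ) + 1)) * ξ)

/-- The Littlewood–Paley projection `K_j f = Σ_{n∈ℤ} χ_j(|n|) f̂(n) e^{inx}`. -/
noncomputable def LPproj (χ : ℝ → ℝ) (f : ℝ → ℂ) (j : ℕ) (x : ℝ) : ℂ :=
  ∑' n : ℤ, ((chij χ j |(n : ℝ)| : ℝ) : ℂ) * fc f n * Complex.exp (Complex.I * n * x)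

/-!
By Parseval and `‖K_j f‖₂² ≤ ‖K_j f‖₁ ‖K_j f‖_∞`, the coefficients `χ_j(|n|) f̂(n)` of the `j`-th
block have square sum `O(2^{-(r₁ + r₂)j})`. On the support of `χ_j` the weight `(1 + n²)^r` is
comparable to `4^{jr}`, and every frequency `n` has some `χ_j(|n|) ≥ 1/3`, so the Sobolev sum is
dominated by the geometric series `∑_j 2^{(2r - r₁ - r₂)j}`.
-/

lemma rpow_le_rpow_abs_mul_rpow {c x y : ℝ} (hx : 0 < x) (hy : 0 < y) (hxy : x ≤ c * y)
    (hyx : y ≤ c * x) (r : ℝ) : x ^ r ≤ c ^ |r| * y ^ r := by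
  have hc : 0 < c := pos_of_mul_pos_left (hx.trans_le hxy) hy.le
  rcases le_total 0 r with hr | hr
  · rw [abs_of_nonneg hr, ← mul_rpow hc.le hy.le]
    exact rpow_le_rpow hx.le hxy hr
  · calc x ^ r = c ^ |r| * (c * x) ^ r := by
          rw [abs_of_nonpos hr, mul_rpow hc.le hx.le, ← mul_assoc, ← rpow_add hc, neg_add_cancel,
            rpow_zero, one_mul]
      _ ≤ c ^ |r| * y ^ r :=
          mul_le_mul_of_nonneg_left (rpow_le_rpow_of_nonpos hy hyx hr) (by positivity)

lemma summable_of_forall_exists_le {ι κ : Type*} {u : ι → ℝ} {w : κ → ι → ℝ}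
    (hu : ∀ i, 0 ≤ u i) (hw : ∀ k i, 0 ≤ w k i) (hrow : ∀ k, Summable (w k))
    (htsum : Summable fun k => ∑' i, w k i) (hle : ∀ i, ∃ k, u i ≤ w k i) : Summable u := by
  choose k hk using hle
  have hprod : Summable fun p : κ × ι => w p.1 p.2 :=
    (summable_prod_of_nonneg fun p => hw p.1 p.2).2 ⟨hrow, htsum⟩
  exact .of_nonneg_of_le hu hk
    (hprod.comp_injective (i := fun i => (k i, i)) fun _ _ h => congrArg Prod.snd h)

lemma integral_norm_sq_le_mul_integral_norm {α E : Type*} [MeasurableSpace α]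
    [NormedAddCommGroup E] {μ : Measure α} {g : α → E} {M : ℝ} (hg : Integrable g μ)
    (hM : ∀ᵐ x ∂μ, ‖g x‖ ≤ M) : ∫ x, ‖g x‖ ^ 2 ∂μ ≤ M * ∫ x, ‖g x‖ ∂μ := by
  rw [← integral_const_mul]
  refine integral_mono_of_nonneg (.of_forall fun x => by positivity) (hg.norm.const_mul M) ?_
  filter_upwards [hM] with x hx
  rw [sq]
  exact mul_le_mul_of_nonneg_right hx (norm_nonneg _)

lemma integral_exp_I_int_mul (k : ℤ) :
    ∫ x in (-π)..π, Complex.exp (Complex.I * k * x) = if k = 0 then (2 * π : ℂ) else 0 := by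
  split_ifs with hk
  · simp [hk, two_mul]
  · have hexp : Complex.exp (Complex.I * k * (π : ℝ)) =
        Complex.exp (Complex.I * k * ((-π : ℝ) : ℂ)) :=
      Complex.exp_eq_exp_iff_exists_int.2 ⟨k, by push_cast; ring⟩
    rw [integral_exp_mul_complex (mul_ne_zero Complex.I_ne_zero (Int.cast_ne_zero.2 hk)), hexp,
      sub_self, zero_div]

lemma fourierCoeffOn_eq_fc (f : ℝ → ℂ) (n : ℤ) :
    fourierCoeffOn (neg_lt_self pi_pos) f n = fc f n := by
  rw [fourierCoeffOn_eq_integral, fc, sub_neg_eq_add, ← two_mul, Complex.real_smul]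
  congr 1
  · push_cast; rfl
  · refine intervalIntegral.integral_congr fun x _ => ?_
    simp only [fourier_coe_apply, smul_eq_mul]
    congr 2
    push_cast
    field_simp

lemma hasSum_sq_norm_fc {f : ℝ → ℂ} (hf : MemLp f 2 (volume.restrict (Ioc (-π) π))) :
    HasSum (fun n => ‖fc f n‖ ^ 2) ((2 * π)⁻¹ * ∫ x in (-π)..π, ‖f x‖ ^ 2) := by
  simpa only [fourierCoeffOn_eq_fc, sub_neg_eq_add, ← two_mul, smul_eq_mul] using
    hasSum_sq_fourierCoeffOn (neg_lt_self pi_pos) hf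

/-- The trigonometric series with coefficients `c`, as a function on the line; its value is `0` at
points where the series is not unconditionally summable. -/
noncomputable def trigSeries (c : ℤ → ℂ) (x : ℝ) : ℂ :=
  ∑' n : ℤ, c n * Complex.exp (Complex.I * n * x)

section trigSeries

variable {c : ℤ → ℂ}

lemma norm_exp_I_int_mul (n : ℤ) (x : ℝ) : ‖Complex.exp (Complex.I * n * x)‖ = 1 := by
  simp [Complex.norm_exp]

lemma continuous_trigSeries (hc : Summable fun n => ‖c n‖) : Continuous (trigSeries c) :=
  continuous_tsum (fun n => by fun_prop) hc fun n x => by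
    rw [norm_mul, norm_exp_I_int_mul, mul_one]

lemma hasSum_integral_exp_neg_mul_trigSeries (hc : Summable fun n => ‖c n‖) (n : ℤ) :
    HasSum (fun m : ℤ => c m * ∫ x in (-π)..π, Complex.exp (Complex.I * (m - n : ℤ) * x))
      (∫ x in (-π)..π, Complex.exp (-Complex.I * n * x) * trigSeries c x) := by
  simp_rw [← intervalIntegral.integral_const_mul]
  refine intervalIntegral.hasSum_integral_of_dominated_convergence (fun m _ => ‖c m‖)
    (fun m => by fun_prop) (fun m => .of_forall fun x _ => ?_) (.of_forall fun x _ => hc)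
    (by simp) (.of_forall fun x _ => ?_)
  · rw [norm_mul, norm_exp_I_int_mul, mul_one]
  · have hx : Summable fun m : ℤ => c m * Complex.exp (Complex.I * m * x) :=
      .of_norm (by simpa only [norm_mul, norm_exp_I_int_mul, mul_one] using hc)
    have hexp (m : ℤ) : Complex.exp (Complex.I * (m - n : ℤ) * x) =
        Complex.exp (-Complex.I * n * x) * Complex.exp (Complex.I * m * x) := by
      rw [← Complex.exp_add]
      congr 1
      push_cast
      ring
    simp only [hexp, mul_left_comm (c _)]
    exact hx.hasSum.mul_left _

lemma fc_trigSeries (hc : Summable fun n => ‖c n‖) (n : ℤ) : fc (trigSeries c) n = c n := by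
  have hterm : ∀ m ≠ n, c m * ∫ x in (-π)..π, Complex.exp (Complex.I * (m - n : ℤ) * x) = 0 :=
    fun m hm => by rw [integral_exp_I_int_mul, if_neg (sub_ne_zero.2 hm), mul_zero]
  rw [fc, ← (hasSum_integral_exp_neg_mul_trigSeries hc n).tsum_eq, tsum_eq_single n hterm,
    integral_exp_I_int_mul, if_pos (sub_self n)]
  field_simp

lemma norm_trigSeries_le (hc : Summable fun n => ‖c n‖) (x : ℝ) :
    ‖trigSeries c x‖ ≤ ∑' n, ‖c n‖ :=
  tsum_of_norm_bounded hc.hasSum fun n => by rw [norm_mul, norm_exp_I_int_mul, mul_one]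

lemma hasSum_sq_norm_trigSeries (hc : Summable fun n => ‖c n‖) :
    HasSum (fun n => ‖c n‖ ^ 2) ((2 * π)⁻¹ * ∫ x in (-π)..π, ‖trigSeries c x‖ ^ 2) := by
  have hL2 : MemLp (trigSeries c) 2 (volume.restrict (Ioc (-π) π)) :=
    .of_bound (continuous_trigSeries hc).aestronglyMeasurable _ (.of_forall (norm_trigSeries_le hc))
  simpa only [fc_trigSeries hc] using hasSum_sq_norm_fc hL2

lemma tsum_sq_norm_le_of_norm_trigSeries_le {M : ℝ} (hc : Summable fun n => ‖c n‖)
    (hM : ∀ x, ‖trigSeries c x‖ ≤ M) :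
    ∑' n, ‖c n‖ ^ 2 ≤ (2 * π)⁻¹ * (M * ∫ x in (-π)..π, ‖trigSeries c x‖) := by
  have hπ : -π ≤ π := neg_le_self pi_pos.le
  rw [(hasSum_sq_norm_trigSeries hc).tsum_eq, intervalIntegral.integral_of_le hπ,
    intervalIntegral.integral_of_le hπ]
  refine mul_le_mul_of_nonneg_left ?_ (by positivity)
  exact integral_norm_sq_le_mul_integral_norm
    ((continuous_trigSeries hc).integrableOn_Icc.mono_set Ioc_subset_Icc_self) (.of_forall hM)

end trigSeries

lemma chij_apply_zero {χ : ℝ → ℝ} (hχ : χ 0 = 0) (j : ℕ) : chij χ j 0 = if j = 0 then 1 else 0 := by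
  cases j <;> simp [chij, hχ]

lemma mem_Icc_of_two_pow_mem_Icc {j k : ℕ} {ξ : ℝ} (hk : ξ ∈ Ico ((2 : ℝ) ^ k) (2 ^ (k + 1)))
    (hj : (2 : ℝ) ^ j ∈ Icc (ξ / 2) (2 * ξ)) : j ∈ Finset.Icc (k - 1) (k + 1) := by
  have hkj : (2 : ℝ) ^ k ≤ 2 ^ (j + 1) := by rw [pow_succ]; linarith [hk.1, hj.1]
  have hjk : (2 : ℝ) ^ j < 2 ^ (k + 2) := by rw [pow_succ]; linarith [hk.2, hj.2]
  rw [pow_le_pow_iff_right₀ one_lt_two] at hkj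
  rw [pow_lt_pow_iff_right₀ one_lt_two] at hjk
  rw [Finset.mem_Icc]
  lia

/-- `χ` generates a dyadic partition of unity on `[1, ∞)`, with each dilate `χ(2^{-j} ·)` living at
frequencies between `2^{j-1}` and `2^{j+1}`. -/
structure IsDyadicCutoff (χ : ℝ → ℝ) : Prop where
  support_subset : Function.support χ ⊆ Icc (1 / 2) 2
  tsum_dilate : ∀ ξ : ℝ, 1 ≤ ξ → ∑' j : ℕ, χ ((2 : ℝ) ^ (-(j : ℝ)) * ξ) = 1

namespace IsDyadicCutoff

variable {χ : ℝ → ℝ}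

lemma chij_of_one_le (hχ : IsDyadicCutoff χ) {ξ : ℝ} (hξ : 1 ≤ ξ) (j : ℕ) :
    chij χ j ξ = χ ((2 : ℝ) ^ (-(j : ℝ)) * ξ) := by
  cases j with
  | zero =>
    have hsummable : Summable fun j : ℕ => χ ((2 : ℝ) ^ (-(j : ℝ)) * ξ) := by
      by_contra h
      exact zero_ne_one ((tsum_eq_zero_of_not_summable h).symm.trans (hχ.tsum_dilate ξ hξ))
    have hsplit := hsummable.tsum_eq_zero_add
    rw [hχ.tsum_dilate ξ hξ] at hsplit
    simp only [chij, Nat.cast_add, Nat.cast_one] at hsplit ⊢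
    linarith
  | succ j => simp only [chij, Nat.cast_add, Nat.cast_one]

lemma apply_zero (hχ : IsDyadicCutoff χ) : χ 0 = 0 :=
  Function.notMem_support.1 fun h => by linarith [(hχ.support_subset h).1]

lemma two_pow_mem_Icc_of_ne_zero (hχ : IsDyadicCutoff χ) {j : ℕ} {ξ : ℝ}
    (h : χ ((2 : ℝ) ^ (-(j : ℝ)) * ξ) ≠ 0) : (2 : ℝ) ^ j ∈ Icc (ξ / 2) (2 * ξ) := by
  have hmem := hχ.support_subset h
  have hpos : (0 : ℝ) < 2 ^ j := by positivity
  rw [rpow_neg zero_le_two, rpow_natCast, inv_mul_eq_div, mem_Icc, le_div_iff₀ hpos,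
    div_le_iff₀ hpos] at hmem
  constructor <;> linarith [hmem.1, hmem.2]

lemma exists_one_third_le_chij_of_one_le (hχ : IsDyadicCutoff χ) {ξ : ℝ} (hξ : 1 ≤ ξ) :
    ∃ j, 1 / 3 ≤ chij χ j ξ := by
  -- At most three of the dyadic dilates of `χ` are nonzero at `ξ`, and they sum to `1`.
  obtain ⟨k, hk⟩ := exists_nat_pow_near hξ one_lt_two
  have hthree : ∑ j ∈ Finset.Icc (k - 1) (k + 1), χ ((2 : ℝ) ^ (-(j : ℝ)) * ξ) = 1 := by
    rw [← hχ.tsum_dilate ξ hξ]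
    refine (tsum_eq_sum fun j hj => ?_).symm
    contrapose! hj
    exact mem_Icc_of_two_pow_mem_Icc hk (hχ.two_pow_mem_Icc_of_ne_zero hj)
  have hcard : ((Finset.Icc (k - 1) (k + 1)).card : ℝ) ≤ 3 := by
    rw [Nat.card_Icc]
    exact_mod_cast (by lia)
  obtain ⟨j, -, hj⟩ := Finset.exists_le_of_sum_le (f := fun _ => (1 / 3 : ℝ))
    (g := fun j : ℕ => χ ((2 : ℝ) ^ (-(j : ℝ)) * ξ))
    (Finset.nonempty_Icc.2 (by lia : k - 1 ≤ k + 1))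
    (by rw [hthree, Finset.sum_const, nsmul_eq_mul]; linarith)
  exact ⟨j, by rwa [hχ.chij_of_one_le hξ]⟩

lemma exists_one_third_le_chij (hχ : IsDyadicCutoff χ) (n : ℤ) :
    ∃ j, 1 / 3 ≤ chij χ j |(n : ℝ)| := by
  rcases eq_or_ne n 0 with rfl | hn
  · exact ⟨0, by norm_num [chij_apply_zero hχ.apply_zero]⟩
  · exact hχ.exists_one_third_le_chij_of_one_le (mod_cast Int.one_le_abs hn)

lemma one_add_sq_comparable_four_pow_of_chij_ne_zero (hχ : IsDyadicCutoff χ) {n : ℤ} {j : ℕ}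
    (h : chij χ j |(n : ℝ)| ≠ 0) :
    1 + (n : ℝ) ^ 2 ≤ 5 * 4 ^ j ∧ (4 : ℝ) ^ j ≤ 5 * (1 + (n : ℝ) ^ 2) := by
  rcases eq_or_ne n 0 with rfl | hn
  · have hj : j = 0 := by simpa [chij_apply_zero hχ.apply_zero] using h
    norm_num [hj]
  · rw [hχ.chij_of_one_le (mod_cast Int.one_le_abs hn)] at h
    obtain ⟨hlower, hupper⟩ := hχ.two_pow_mem_Icc_of_ne_zero h
    have hfour : (4 : ℝ) ^ j = (2 ^ j) ^ 2 := by rw [← pow_mul, mul_comm, pow_mul]; norm_num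
    have hone : (1 : ℝ) ≤ 4 ^ j := one_le_pow₀ (by norm_num)
    have hsq_lower := pow_le_pow_left₀ (by positivity) hlower 2
    have hsq_upper := pow_le_pow_left₀ (by positivity) hupper 2
    rw [div_pow, sq_abs, ← hfour] at hsq_lower
    rw [mul_pow, sq_abs, ← hfour] at hsq_upper
    constructor <;> linarith

lemma finite_support_chij_abs (hχ : IsDyadicCutoff χ) (j : ℕ) :
    (Function.support fun n : ℤ => chij χ j |(n : ℝ)|).Finite := by
  refine (finite_Icc (-(5 * 4 ^ j)) (5 * 4 ^ j : ℤ)).subset fun n hn => abs_le.1 ?_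
  have hsq : 1 + n ^ 2 ≤ 5 * 4 ^ j := by
    exact_mod_cast (hχ.one_add_sq_comparable_four_pow_of_chij_ne_zero hn).1
  linarith [Int.le_self_sq |n|, sq_abs n]

end IsDyadicCutoff

/-- The Fourier coefficients of the `j`-th Littlewood–Paley block of a formal trigonometric series
with coefficients `a`, so that `trigSeries (lpCoeff χ a j)` extends `K_j` from functions to
periodic distributions. -/
noncomputable def lpCoeff (χ : ℝ → ℝ) (a : ℤ → ℂ) (j : ℕ) (n : ℤ) : ℂ :=
  (chij χ j |(n : ℝ)| : ℝ) * a n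

lemma LPproj_eq_trigSeries (χ : ℝ → ℝ) (f : ℝ → ℂ) (j : ℕ) :
    LPproj χ f j = trigSeries (lpCoeff χ (fc f) j) :=
  rfl

namespace IsDyadicCutoff

variable {χ : ℝ → ℝ}

lemma hasFiniteSupport_lpCoeff (hχ : IsDyadicCutoff χ) (a : ℤ → ℂ) (j : ℕ) :
    (lpCoeff χ a j).HasFiniteSupport :=
  (hχ.finite_support_chij_abs j).subset fun n hn => by
    contrapose! hn
    simp_all [lpCoeff]

lemma summable_norm_lpCoeff (hχ : IsDyadicCutoff χ) (a : ℤ → ℂ) (j : ℕ) :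
    Summable fun n => ‖lpCoeff χ a j n‖ :=
  (summable_of_hasFiniteSupport (hχ.hasFiniteSupport_lpCoeff a j)).norm

lemma exists_one_add_sq_rpow_mul_le (hχ : IsDyadicCutoff χ) (a : ℤ → ℂ) (r : ℝ) (n : ℤ) :
    ∃ j : ℕ, (1 + (n : ℝ) ^ 2) ^ r * ‖a n‖ ^ 2 ≤
      9 * 5 ^ |r| * (((4 : ℝ) ^ j) ^ r * ‖lpCoeff χ a j n‖ ^ 2) := by
  obtain ⟨j, hj⟩ := hχ.exists_one_third_le_chij n
  obtain ⟨hupper, hlower⟩ :=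
    hχ.one_add_sq_comparable_four_pow_of_chij_ne_zero (by linarith : chij χ j |(n : ℝ)| ≠ 0)
  have hweight : (1 + (n : ℝ) ^ 2) ^ r ≤ 5 ^ |r| * ((4 : ℝ) ^ j) ^ r :=
    rpow_le_rpow_abs_mul_rpow (by positivity) (by positivity) hupper hlower r
  have hcoeff : ‖a n‖ ≤ 3 * ‖lpCoeff χ a j n‖ := by
    rw [lpCoeff, norm_mul, Complex.norm_real, norm_of_nonneg (by linarith)]
    nlinarith [norm_nonneg (a n)]
  refine ⟨j, ?_⟩
  calc (1 + (n : ℝ) ^ 2) ^ r * ‖a n‖ ^ 2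
      ≤ (5 ^ |r| * ((4 : ℝ) ^ j) ^ r) * (3 * ‖lpCoeff χ a j n‖) ^ 2 := by gcongr
    _ = 9 * 5 ^ |r| * (((4 : ℝ) ^ j) ^ r * ‖lpCoeff χ a j n‖ ^ 2) := by ring

lemma tsum_sq_norm_lpCoeff_le (hχ : IsDyadicCutoff χ) {a : ℤ → ℂ} {r₁ r₂ C₁ C₂ : ℝ} {j : ℕ}
    (hL1 : (2 : ℝ) ^ (r₁ * j) * (∫ x in (-π)..π, ‖trigSeries (lpCoeff χ a j) x‖) ≤ C₁)
    (hLinf : ∀ x, (2 : ℝ) ^ (r₂ * j) * ‖trigSeries (lpCoeff χ a j) x‖ ≤ C₂) :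
    ∑' n, ‖lpCoeff χ a j n‖ ^ 2 ≤ (2 * π)⁻¹ * (C₁ * C₂) * (2 : ℝ) ^ (-(r₁ + r₂) * j) := by
  have hC₂ : 0 ≤ C₂ := le_trans (by positivity) (hLinf 0)
  rw [← le_div_iff₀' (by positivity)] at hL1
  have hsup (x : ℝ) : ‖trigSeries (lpCoeff χ a j) x‖ ≤ C₂ / (2 : ℝ) ^ (r₂ * j) :=
    (le_div_iff₀' (by positivity)).2 (hLinf x)
  have hexp : (2 : ℝ) ^ (-(r₁ + r₂) * j) = ((2 : ℝ) ^ (r₁ * j) * (2 : ℝ) ^ (r₂ * j))⁻¹ := by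
    rw [← rpow_add two_pos, ← rpow_neg zero_le_two]
    congr 1
    ring
  calc ∑' n, ‖lpCoeff χ a j n‖ ^ 2
      ≤ (2 * π)⁻¹ * (C₂ / 2 ^ (r₂ * j) * ∫ x in (-π)..π, ‖trigSeries (lpCoeff χ a j) x‖) :=
        tsum_sq_norm_le_of_norm_trigSeries_le (hχ.summable_norm_lpCoeff a j) hsup
    _ ≤ (2 * π)⁻¹ * (C₂ / 2 ^ (r₂ * j) * (C₁ / 2 ^ (r₁ * j))) := by gcongr
    _ = (2 * π)⁻¹ * (C₁ * C₂) * (2 : ℝ) ^ (-(r₁ + r₂) * j) := by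
        rw [hexp]
        field_simp

end IsDyadicCutoff

lemma summable_four_pow_rpow_mul_of_le {s r A : ℝ} {e : ℕ → ℝ} (he : ∀ j, 0 ≤ e j)
    (hle : ∀ j : ℕ, e j ≤ A * (2 : ℝ) ^ (-s * j)) (hr : r < s / 2) :
    Summable fun j : ℕ => ((4 : ℝ) ^ j) ^ r * e j := by
  have hratio : (2 : ℝ) ^ (2 * r - s) < 1 :=
    rpow_lt_one_of_one_lt_of_neg one_lt_two (by linarith)
  refine .of_nonneg_of_le (fun j => mul_nonneg (by positivity) (he j)) (fun j => ?_)
    ((summable_geometric_of_lt_one (by positivity) hratio).mul_left A)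
  have hfour : ((4 : ℝ) ^ j) ^ r = (2 : ℝ) ^ (2 * r * j) := by
    rw [show (4 : ℝ) = 2 ^ (2 : ℝ) by norm_num, ← rpow_mul_natCast zero_le_two,
      ← rpow_mul zero_le_two]
    ring_nf
  calc ((4 : ℝ) ^ j) ^ r * e j
      ≤ (2 : ℝ) ^ (2 * r * j) * (A * (2 : ℝ) ^ (-s * j)) := by
        rw [hfour]
        exact mul_le_mul_of_nonneg_left (hle j) (by positivity)
    _ = A * ((2 : ℝ) ^ (2 * r - s)) ^ j := by
        rw [← rpow_mul_natCast zero_le_two, mul_left_comm, ← rpow_add two_pos]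
        ring_nf

theorem besov_interpolation_sobolev_general {χ : ℝ → ℝ} (hχ : IsDyadicCutoff χ) {r₁ r₂ : ℝ}
    {a : ℤ → ℂ}
    (hB1 : ∃ C : ℝ, ∀ j : ℕ,
      (2 : ℝ) ^ (r₁ * j) * (∫ x in (-π)..π, ‖trigSeries (lpCoeff χ a j) x‖) ≤ C)
    (hBinf : ∃ C : ℝ, ∀ (j : ℕ) (x : ℝ),
      (2 : ℝ) ^ (r₂ * j) * ‖trigSeries (lpCoeff χ a j) x‖ ≤ C)
    {r : ℝ} (hr : r < (r₁ + r₂) / 2) :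
    Summable fun n : ℤ => (1 + (n : ℝ) ^ 2) ^ r * ‖a n‖ ^ 2 := by
  obtain ⟨C₁, hC₁⟩ := hB1
  obtain ⟨C₂, hC₂⟩ := hBinf
  have henergy : Summable fun j : ℕ => ((4 : ℝ) ^ j) ^ r * ∑' n, ‖lpCoeff χ a j n‖ ^ 2 :=
    summable_four_pow_rpow_mul_of_le (fun j => tsum_nonneg fun n => by positivity)
      (fun j => hχ.tsum_sq_norm_lpCoeff_le (hC₁ j) (hC₂ j)) hr
  have hblock (j : ℕ) :
    Summable fun n => ‖lpCoeff χ a j n‖ ^ 2 :=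
    (hasSum_sq_norm_trigSeries (hχ.summable_norm_lpCoeff a j)).summable
  refine summable_of_forall_exists_le
    (w := fun (j : ℕ) n => 9 * 5 ^ |r| * (((4 : ℝ) ^ j) ^ r * ‖lpCoeff χ a j n‖ ^ 2))
    (fun n => by positivity) (fun j n => by positivity)
    (fun j => ((hblock j).mul_left _).mul_left _) ?_
    (hχ.exists_one_add_sq_rpow_mul_le a r)
  simpa only [tsum_mul_left] using henergy.mul_left (9 * 5 ^ |r|)

/-- If `f ∈ B^{r₁}_{1,∞}(T) ∩ B^{r₂}_{∞,∞}(T)`, then `f ∈ H^r(T)` for every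
`r < (r₁ + r₂)/2`, where `H^r(T)` is the `L²`-Sobolev space:
`Σ_n (1+n²)^r |f̂(n)|² < ∞`. -/
theorem besov_interpolation_sobolev (χ : ℝ → ℝ)
    (hχ : ContDiff ℝ (⊤ : ℕ∞) χ) (hχ01 : ∀ ξ, χ ξ ∈ Icc (0 : ℝ) 1)
    (hχsupp : tsupport χ = Icc (1 / 2 : ℝ) 2)
    (hχsum : ∀ ξ : ℝ, 1 ≤ ξ → ∑' j : ℕ, χ ((2 : ℝ) ^ (-(j : ℝ)) * ξ) = 1)
    (r₁ r₂ : ℝ) (f : ℝ → ℂ) (hf : Continuous f) (hper : ∀ x : ℝ, f (x + 2 * π) = f x)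
    (hB1 : ∃ C : ℝ, ∀ j : ℕ,
      (2 : ℝ) ^ (r₁ * j) * (∫ x in (-π : ℝ)..π, ‖LPproj χ f j x‖) ≤ C)
    (hBinf : ∃ C : ℝ, ∀ (j : ℕ) (x : ℝ), (2 : ℝ) ^ (r₂ * j) * ‖LPproj χ f j x‖ ≤ C)
    (r : ℝ) (hr : r < (r₁ + r₂) / 2) :
    Summable fun n : ℤ => (1 + (n : ℝ) ^ 2) ^ r * ‖fc f n‖ ^ 2 := by
  simp only [LPproj_eq_trigSeries] at hB1 hBinf
  exact besov_interpolation_sobolev_general ⟨hχsupp ▸ subset_tsupport χ, hχsum⟩ hB1 hBinf hr
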